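/- Let 𝕡 and Π be finite nonempty sets of policies, let π* be an optimal policy (V^{π*} = V* = max over all policies of V^π, values taken with initial distribution d₀), and let ν be an initial state distribution with ν(s) > 0 for all s ∈ S, so that D∞ = max_{s∈S} d^{π*}(s)/ν(s) is finite. Define the policy completeness E_ν(𝕡, Π) = max_{π∈𝕡} min_{π′∈Π} E_{s∼d^π_ν}[max_{a∈A} Q^π(s,a) − Σ_{a∈A} Q^π(s,a)·π′(a|s)]. Then for every π ∈ 𝕡: V* − V^π ≤ (D∞/(1−γ))·( E_ν(𝕡, Π)/(1−γ) + max_{π′∈Π} (∇_π V^π_ν)ᵀ(π′ − π) ). -/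

import Mathlib

/-!
The performance difference lemma writes `V^{π*} − V^π` as
`(1/(1−γ)) ∑_s d^{π*}(s) ∑_a Q^π(s,a) (π*(a|s) − π(a|s))`, and the inner sum is at most the greedy gap
`g(s) = max_a Q^π(s,a) − ∑_a Q^π(s,a) π(a|s) ≥ 0`. Since `d^{π*} ≤ D∞ ν` and
`(1−γ) ν ≤ d^π_ν` pointwise, the difference is at most `D∞/(1−γ)² · ∑_s d^π_ν(s) g(s)`. For the
`π' ∈ Π` attaining the minimum in the policy completeness, `g` splits as the gap of `π'` plus
`∑_a Q^π(s,a) (π' − π)(a|s)`; averaged over `d^π_ν`, the first part is bounded by the completeness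
and the second is `1−γ` times the gradient pairing.

The performance difference lemma is obtained by linear algebra rather than by telescoping:
the unnormalized visitation `x = d^π_μ/(1−γ)` solves `x = μ + γ P^π x` (`visitDist_flow`), the value
is `V^π_μ = ∑_s x(s) r^π(s)` (`valueV_eq_visitDist`), and `V^π` is linear in the initial
distribution (`valueV_linear`).
-/

open Finset

noncomputable section

/-- `π` is a stochastic policy: `π s` is a probability distribution over actions. -/
def IsPolicy {S A : Type*} [Fintype A] (π : S → A → ℝ) : Prop :=
  (∀ s a, 0 ≤ π s a) ∧ ∀ s, ∑ a, π s a = 1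

/-- `P` is a transition probability model: `P s a` is a distribution over next states. -/
def IsKernel {S A : Type*} [Fintype S] (P : S → A → S → ℝ) : Prop :=
  (∀ s a s', 0 ≤ P s a s') ∧ ∀ s a, ∑ s', P s a s' = 1

/-- `d` is a probability distribution over states. -/
def IsDist {S : Type*} [Fintype S] (d : S → ℝ) : Prop :=
  (∀ s, 0 ≤ d s) ∧ ∑ s, d s = 1

/-- The Markov operator `P^π` induced by policy `π` acting on distributions over states:
`(P^π d)(s') = ∑_s ∑_a P(s'|s,a)·π(a|s)·d(s)`. -/
def markovStep {S A : Type*} [Fintype S] [Fintype A] (P : S → A → S → ℝ)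
    (π : S → A → ℝ) (d : S → ℝ) : S → ℝ :=
  fun s' => ∑ s, ∑ a, P s a s' * π s a * d s

/-- The discounted state-visitation distribution
`d^π_μ(s) = (1−γ) ∑_{t≥0} γ^t Pr(s_t = s | π, s₀ ∼ μ)`. -/
def visitDist {S A : Type*} [Fintype S] [Fintype A] (P : S → A → S → ℝ) (γ : ℝ)
    (π : S → A → ℝ) (μ : S → ℝ) : S → ℝ :=
  fun s => (1 - γ) * ∑' t : ℕ, γ ^ t * ((markovStep P π)^[t] μ) s

/-- The value function `V^π_μ = E[∑_{t≥0} γ^t r(s_t,a_t)]` with `s₀ ∼ μ`, actions from `π`. -/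
def valueV {S A : Type*} [Fintype S] [Fintype A] (P : S → A → S → ℝ) (r : S → A → ℝ)
    (γ : ℝ) (π : S → A → ℝ) (μ : S → ℝ) : ℝ :=
  ∑' t : ℕ, γ ^ t * ∑ s, ((markovStep P π)^[t] μ) s * ∑ a, π s a * r s a

/-- The state-action value function
`Q^π(s,a) = E[∑_{t≥0} γ^t r(s_t,a_t) | s₀ = s, a₀ = a, actions thereafter from π]`. -/
def valueQ {S A : Type*} [Fintype S] [Fintype A] [DecidableEq S] (P : S → A → S → ℝ)
    (r : S → A → ℝ) (γ : ℝ) (π : S → A → ℝ) (s : S) (a : A) : ℝ :=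
  r s a + γ * ∑ s', P s a s' * valueV P r γ π (fun s'' => if s'' = s' then 1 else 0)

/-- The functional policy gradient `(∇_π V^π_μ)(s,a) = (1/(1−γ))·d^π_μ(s)·Q^π(s,a)`. -/
def gradV {S A : Type*} [Fintype S] [Fintype A] [DecidableEq S] (P : S → A → S → ℝ)
    (r : S → A → ℝ) (γ : ℝ) (π : S → A → ℝ) (μ : S → ℝ) : S → A → ℝ :=
  fun s a => (1 / (1 - γ)) * visitDist P γ π μ s * valueQ P r γ π s a

/-- The pairing `xᵀ y = ∑_{s,a} x(s,a)·y(s,a)` on `ℝ^{S×A}`. -/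
def dotSA {S A : Type*} [Fintype S] [Fintype A] (x y : S → A → ℝ) : ℝ :=
  ∑ s, ∑ a, x s a * y s a

/-- The norm `∥x∥_{∞,1} = max_{s∈S} ∑_{a∈A} |x(s,a)|` on `ℝ^{S×A}`. -/
def normInfOne {S A : Type*} [Fintype S] [Fintype A] [Nonempty S] (x : S → A → ℝ) : ℝ :=
  ⨆ s, ∑ a, |x s a|

/-- The `ℓ₁` (total-variation) norm `∥d∥₁ = ∑_{s∈S} |d s|` on `ℝ^S`. -/
def normL1 {S : Type*} [Fintype S] (d : S → ℝ) : ℝ := ∑ s, |d s|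

section Helpers

variable {S A : Type*} [Fintype S] [Fintype A]

lemma markovStep_isDist {P : S → A → S → ℝ} (hP : IsKernel P) {π : S → A → ℝ}
    (hπ : IsPolicy π) {μ : S → ℝ} (hμ : IsDist μ) : IsDist (markovStep P π μ) := by
  refine ⟨fun s' => sum_nonneg fun s _ => sum_nonneg fun a _ =>
    mul_nonneg (mul_nonneg (hP.1 _ _ _) (hπ.1 _ _)) (hμ.1 _), ?_⟩
  unfold markovStep
  rw [sum_comm, ← hμ.2]
  refine sum_congr rfl fun s _ => ?_
  rw [sum_comm]
  simp_rw [← sum_mul, hP.2, one_mul, hπ.2, one_mul]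

lemma iterate_isDist {P : S → A → S → ℝ} (hP : IsKernel P) {π : S → A → ℝ}
    (hπ : IsPolicy π) {μ : S → ℝ} (hμ : IsDist μ) (t : ℕ) :
    IsDist ((markovStep P π)^[t] μ) := by
  induction t with
  | zero => exact hμ
  | succ t ih =>
    rw [Function.iterate_succ_apply']
    exact markovStep_isDist hP hπ ih

lemma summable_visit {P : S → A → S → ℝ} (hP : IsKernel P) {π : S → A → ℝ}
    (hπ : IsPolicy π) {μ : S → ℝ} (hμ : IsDist μ) {γ : ℝ} (hγ : γ ∈ Set.Ico (0 : ℝ) 1) (s : S) :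
    Summable fun t : ℕ => γ ^ t * ((markovStep P π)^[t] μ) s := by
  refine Summable.of_nonneg_of_le
    (fun t => mul_nonneg (pow_nonneg hγ.1 t) ((iterate_isDist hP hπ hμ t).1 s)) (fun t => ?_)
    (summable_geometric_of_lt_one hγ.1 hγ.2)
  have hd := iterate_isDist hP hπ hμ t
  refine mul_le_of_le_one_right (pow_nonneg hγ.1 t) ?_
  rw [← hd.2]
  exact single_le_sum (f := (markovStep P π)^[t] μ) (fun i _ => hd.1 i) (mem_univ s)

lemma visitDist_nonneg {P : S → A → S → ℝ} (hP : IsKernel P) {π : S → A → ℝ}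
    (hπ : IsPolicy π) {μ : S → ℝ} (hμ : IsDist μ) {γ : ℝ} (hγ : γ ∈ Set.Ico (0 : ℝ) 1) (s : S) :
    0 ≤ visitDist P γ π μ s :=
  mul_nonneg (by linarith [hγ.2]) (tsum_nonneg fun t =>
    mul_nonneg (pow_nonneg hγ.1 t) ((iterate_isDist hP hπ hμ t).1 s))

/-- The `t = 0` term already contributes `(1−γ) μ` to the visitation distribution. -/
lemma le_visitDist {P : S → A → S → ℝ} (hP : IsKernel P) {π : S → A → ℝ}
    (hπ : IsPolicy π) {μ : S → ℝ} (hμ : IsDist μ) {γ : ℝ} (hγ : γ ∈ Set.Ico (0 : ℝ) 1) (s : S) :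
    (1 - γ) * μ s ≤ visitDist P γ π μ s := by
  refine mul_le_mul_of_nonneg_left ?_ (by linarith [hγ.2])
  have h := (summable_visit hP hπ hμ hγ s).le_tsum 0 fun t _ =>
    mul_nonneg (pow_nonneg hγ.1 t) ((iterate_isDist hP hπ hμ t).1 s)
  simpa using h

/-- The discounted flow equation `d^π_μ = (1−γ) μ + γ P^π d^π_μ`. -/
lemma visitDist_flow {P : S → A → S → ℝ} (hP : IsKernel P) {π : S → A → ℝ}
    (hπ : IsPolicy π) {μ : S → ℝ} (hμ : IsDist μ) {γ : ℝ} (hγ : γ ∈ Set.Ico (0 : ℝ) 1) (s : S) :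
    visitDist P γ π μ s = (1 - γ) * μ s + γ * markovStep P π (visitDist P γ π μ) s := by
  have hsum := summable_visit hP hπ hμ hγ
  have hstep : HasSum (fun t : ℕ => γ ^ (t + 1) * ((markovStep P π)^[t + 1] μ) s)
      (γ * ∑ u, ∑ a, P u a s * π u a * ∑' t : ℕ, γ ^ t * ((markovStep P π)^[t] μ) u) := by
    have h := (hasSum_sum fun u (_ : u ∈ univ) => hasSum_sum fun a (_ : a ∈ univ) =>
      (hsum u).hasSum.mul_left (P u a s * π u a)).mul_left γ
    have hterm : (fun t : ℕ => γ ^ (t + 1) * ((markovStep P π)^[t + 1] μ) s) = fun t : ℕ =>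
        γ * ∑ u, ∑ a, P u a s * π u a * (γ ^ t * ((markovStep P π)^[t] μ) u) := by
      funext t
      rw [Function.iterate_succ_apply']
      simp only [markovStep, mul_sum]
      exact sum_congr rfl fun u _ => sum_congr rfl fun a _ => by ring
    rw [hterm]
    exact h
  have hsplit := (hsum s).tsum_eq_zero_add
  rw [hstep.tsum_eq] at hsplit
  simp only [pow_zero, one_mul, Function.iterate_zero, id] at hsplit
  have hscale : markovStep P π (visitDist P γ π μ) s = (1 - γ) *
      ∑ u, ∑ a, P u a s * π u a * ∑' t : ℕ, γ ^ t * ((markovStep P π)^[t] μ) u := by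
    simp only [markovStep, visitDist, mul_sum]
    exact sum_congr rfl fun u _ => sum_congr rfl fun a _ => by ring
  rw [hscale, visitDist, hsplit]
  ring

lemma valueV_eq_visitDist {P : S → A → S → ℝ} (hP : IsKernel P) (r : S → A → ℝ)
    {π : S → A → ℝ} (hπ : IsPolicy π) {μ : S → ℝ} (hμ : IsDist μ) {γ : ℝ}
    (hγ : γ ∈ Set.Ico (0 : ℝ) 1) :
    (1 - γ) * valueV P r γ π μ = ∑ s, visitDist P γ π μ s * ∑ a, π s a * r s a := by
  have h := hasSum_sum fun s (_ : s ∈ univ) =>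
    (summable_visit hP hπ hμ hγ s).hasSum.mul_right (∑ a, π s a * r s a)
  have hV : valueV P r γ π μ =
      ∑ s, (∑' t : ℕ, γ ^ t * ((markovStep P π)^[t] μ) s) * ∑ a, π s a * r s a := by
    rw [← h.tsum_eq, valueV]
    simp only [mul_sum univ _ (γ ^ _), mul_assoc]
  simp only [hV, visitDist, mul_sum univ _ (1 - γ), mul_assoc]

lemma isDist_dirac [DecidableEq S] (s' : S) :
    IsDist (fun s'' : S => if s'' = s' then (1 : ℝ) else 0) :=
  ⟨fun s => by dsimp only; split_ifs <;> norm_num, by simp⟩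

lemma iterate_linear [DecidableEq S] (P : S → A → S → ℝ) (π : S → A → ℝ) (μ : S → ℝ)
    (t : ℕ) (s : S) : ((markovStep P π)^[t] μ) s =
      ∑ u, μ u * ((markovStep P π)^[t] (fun s'' => if s'' = u then 1 else 0)) s := by
  induction t generalizing s with
  | zero => simp
  | succ t ih =>
    simp only [Function.iterate_succ_apply']
    unfold markovStep at ih ⊢
    simp only [ih, mul_sum]
    rw [sum_comm_cycle]
    exact sum_congr rfl fun u _ => sum_congr rfl fun v _ => sum_congr rfl fun a _ => by ring

/-- The value is linear in the initial distribution. -/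
lemma valueV_linear [DecidableEq S] {P : S → A → S → ℝ} (hP : IsKernel P) (r : S → A → ℝ)
    {π : S → A → ℝ} (hπ : IsPolicy π) {μ : S → ℝ} (hμ : IsDist μ) {γ : ℝ}
    (hγ : γ ∈ Set.Ico (0 : ℝ) 1) :
    valueV P r γ π μ =
      ∑ u, μ u * valueV P r γ π (fun s'' => if s'' = u then 1 else 0) := by
  have hvisit : ∀ s, visitDist P γ π μ s =
      ∑ u, μ u * visitDist P γ π (fun s'' => if s'' = u then 1 else 0) s := by
    intro s
    have h := hasSum_sum fun u (_ : u ∈ univ) =>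
      (summable_visit hP hπ (isDist_dirac u) hγ s).hasSum.mul_left (μ u)
    have h2 : ∑' t : ℕ, γ ^ t * ((markovStep P π)^[t] μ) s = ∑ u, μ u *
        ∑' t : ℕ, γ ^ t * ((markovStep P π)^[t] (fun s'' => if s'' = u then 1 else 0)) s := by
      rw [← h.tsum_eq]
      refine tsum_congr fun t => ?_
      rw [iterate_linear, mul_sum]
      exact sum_congr rfl fun u _ => by ring
    simp only [visitDist, h2, mul_sum univ _ (1 - γ)]
    exact sum_congr rfl fun u _ => by ring
  have h1 : (1 - γ) ≠ 0 := by linarith [hγ.2]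
  refine mul_left_cancel₀ h1 ?_
  rw [valueV_eq_visitDist hP r hπ hμ hγ, mul_sum]
  simp only [hvisit, sum_mul]
  rw [sum_comm]
  refine sum_congr rfl fun u _ => ?_
  rw [mul_left_comm, valueV_eq_visitDist hP r hπ (isDist_dirac u) hγ, mul_sum]
  exact sum_congr rfl fun s _ => by ring

/-- One-step identity: averaging `Q^π` against another policy `π'` and state weights `x` gives the
expected reward plus the discounted value of `π` after one step of `π'`. -/
lemma sum_valueQ [DecidableEq S] (P : S → A → S → ℝ) (r : S → A → ℝ) (γ : ℝ)
    (π π' : S → A → ℝ) (x : S → ℝ) :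
    ∑ s, x s * ∑ a, valueQ P r γ π s a * π' s a =
      ∑ s, x s * ∑ a, π' s a * r s a + γ * ∑ s', markovStep P π' x s' *
        valueV P r γ π (fun s'' => if s'' = s' then 1 else 0) := by
  generalize hv : (fun s' => valueV P r γ π (fun s'' => if s'' = s' then 1 else 0)) = v
  have hv' : ∀ s', valueV P r γ π (fun s'' => if s'' = s' then 1 else 0) = v s' :=
    fun s' => congrFun hv s'
  have hflow : ∑ s', markovStep P π' x s' * v s' =
      ∑ s, x s * ∑ a, π' s a * ∑ s', P s a s' * v s' := by
    simp only [markovStep, sum_mul]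
    rw [sum_comm]
    refine sum_congr rfl fun s _ => ?_
    rw [sum_comm, mul_sum]
    refine sum_congr rfl fun a _ => ?_
    rw [mul_sum, mul_sum]
    exact sum_congr rfl fun s' _ => by ring
  simp only [valueQ, hv', hflow]
  rw [mul_sum, ← sum_add_distrib]
  refine sum_congr rfl fun s _ => ?_
  rw [mul_left_comm, ← mul_add, mul_sum univ _ γ, ← sum_add_distrib]
  congr 1
  exact sum_congr rfl fun a _ => by ring

/-- The Bellman equation `V^π(s) = ∑_a Q^π(s,a) π(a|s)`. -/
lemma bellman [DecidableEq S] {P : S → A → S → ℝ} (hP : IsKernel P) (r : S → A → ℝ)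
    {π : S → A → ℝ} (hπ : IsPolicy π) {γ : ℝ} (hγ : γ ∈ Set.Ico (0 : ℝ) 1) (s : S) :
    valueV P r γ π (fun s'' => if s'' = s then 1 else 0) = ∑ a, valueQ P r γ π s a * π s a := by
  have hd := isDist_dirac s
  have h := sum_valueQ P r γ π π (fun s'' => if s'' = s then 1 else 0)
  rw [← valueV_linear hP r hπ (markovStep_isDist hP hπ hd) hγ] at h
  simp only [ite_mul, one_mul, zero_mul, sum_ite_eq', mem_univ, if_true] at h
  -- What remains is `V^π(s) = r^π(s) + γ V^π_{P^π δ_s}`: the time series with its first term split off.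
  rw [h, valueV]
  have hsum : Summable fun t : ℕ => γ ^ t * ∑ u,
      ((markovStep P π)^[t] (fun s'' => if s'' = s then 1 else 0)) u * ∑ a, π u a * r u a := by
    simp only [mul_sum univ _ (γ ^ _), ← mul_assoc]
    exact summable_sum fun u _ => (summable_visit hP hπ hd hγ u).mul_right _
  rw [hsum.tsum_eq_zero_add, valueV, ← tsum_mul_left]
  simp only [Function.iterate_succ_apply, pow_succ', mul_assoc]
  simp

/-- The performance difference lemma. -/
lemma performance_difference [DecidableEq S] {P : S → A → S → ℝ} (hP : IsKernel P)
    (r : S → A → ℝ) {π π' : S → A → ℝ} (hπ : IsPolicy π) (hπ' : IsPolicy π') {μ : S → ℝ}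
    (hμ : IsDist μ) {γ : ℝ} (hγ : γ ∈ Set.Ico (0 : ℝ) 1) :
    (1 - γ) * (valueV P r γ π' μ - valueV P r γ π μ) =
      ∑ s, visitDist P γ π' μ s *
        (∑ a, valueQ P r γ π s a * π' s a - ∑ a, valueQ P r γ π s a * π s a) := by
  simp only [mul_sub, sum_sub_distrib]
  rw [sum_valueQ, valueV_eq_visitDist hP r hπ' hμ hγ, valueV_linear hP r hπ hμ hγ]
  simp only [← bellman hP r hπ hγ]
  have hflow : ∀ s, γ * markovStep P π' (visitDist P γ π' μ) s =
      visitDist P γ π' μ s - (1 - γ) * μ s := fun s => by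
    linarith [visitDist_flow hP hπ' hμ hγ s]
  rw [mul_sum univ _ γ]
  simp only [← mul_assoc, hflow, sub_mul, sum_sub_distrib, mul_sum]
  ring

end Helpers

/-- **Gradient domination with `ν`-restarts (Lemma `lem:domnu`).**
Let `PP` and `PiW` be finite nonempty sets of policies, `πstar` an optimal policy
(w.r.t. initial distribution `d₀`), and `ν` an initial distribution with `ν(s) > 0` for
all `s`, so `D∞ = max_s d^{πstar}(s)/ν(s)` is finite. With policy completeness
`E_ν(PP,PiW) = max_{π∈PP} min_{π'∈PiW} E_{s∼d^π_ν}[max_a Q^π(s,a) − ∑_a Q^π(s,a)·π'(a|s)]`,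
for every `π ∈ PP`:
`V* − V^π ≤ (D∞/(1−γ))·( E_ν(PP,PiW)/(1−γ) + max_{π'∈PiW} (∇_π V^π_ν)ᵀ(π' − π) )`. -/
theorem gradient_domination_nu_reset {S A : Type*} [Fintype S] [Fintype A] [Nonempty S]
    [Nonempty A] [DecidableEq S]
    (P : S → A → S → ℝ) (r : S → A → ℝ) (γ : ℝ) (d₀ : S → ℝ)
    (hP : IsKernel P) (hr : ∀ s a, r s a ∈ Set.Icc (0 : ℝ) 1)
    (hγ : γ ∈ Set.Ico (0 : ℝ) 1) (hd₀ : IsDist d₀)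
    (PP PiW : Finset (S → A → ℝ)) (hPPne : PP.Nonempty) (hPiWne : PiW.Nonempty)
    (hPPpol : ∀ π ∈ PP, IsPolicy π) (hPiWpol : ∀ π' ∈ PiW, IsPolicy π')
    (πstar : S → A → ℝ) (hπstar : IsPolicy πstar)
    (hopt : ∀ π : S → A → ℝ, IsPolicy π → valueV P r γ π d₀ ≤ valueV P r γ πstar d₀)
    (ν : S → ℝ) (hν : IsDist ν) (hνpos : ∀ s : S, 0 < ν s) :
    ∀ π ∈ PP,
      valueV P r γ πstar d₀ - valueV P r γ π d₀ ≤
        (⨆ s, visitDist P γ πstar d₀ s / ν s) / (1 - γ) *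
          ((PP.sup' hPPne fun π₁ => PiW.inf' hPiWne fun π₂ =>
              ∑ s, visitDist P γ π₁ ν s *
                ((⨆ a, valueQ P r γ π₁ s a) - ∑ a, valueQ P r γ π₁ s a * π₂ s a)) / (1 - γ) +
            PiW.sup' hPiWne fun π₂ =>
              dotSA (gradV P r γ π ν) fun s a => π₂ s a - π s a) := by
  intro π hπmem
  have hπ := hPPpol π hπmem
  have h1γ : 0 < 1 - γ := by linarith [hγ.2]
  set D := ⨆ s, visitDist P γ πstar d₀ s / ν s with hD
  set Q := valueQ P r γ π with hQ
  set d := visitDist P γ π ν with hd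
  set g : S → ℝ := fun s => (⨆ a, Q s a) - ∑ a, Q s a * π s a with hg
  have hmax : ∀ (π₁ : S → A → ℝ), IsPolicy π₁ → ∀ s, ∑ a, Q s a * π₁ s a ≤ ⨆ a, Q s a := by
    intro π₁ h₁ s
    calc ∑ a, Q s a * π₁ s a ≤ ∑ a, (⨆ a, Q s a) * π₁ s a :=
          sum_le_sum fun a _ => mul_le_mul_of_nonneg_right
            (le_ciSup (Set.finite_range (Q s)).bddAbove a) (h₁.1 s a)
      _ = ⨆ a, Q s a := by rw [← mul_sum, h₁.2, mul_one]
  have hg0 : ∀ s, 0 ≤ g s := fun s => sub_nonneg.2 (hmax π hπ s)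
  have hDν : ∀ s, visitDist P γ πstar d₀ s ≤ D * ν s := fun s => by
    rw [← div_le_iff₀ (hνpos s)]
    exact le_ciSup (f := fun s => visitDist P γ πstar d₀ s / ν s)
      (Set.finite_range _).bddAbove s
  have hD0 : 0 ≤ D := Real.iSup_nonneg fun s =>
    div_nonneg (visitDist_nonneg hP hπstar hd₀ hγ s) (hνpos s).le
  -- Change of measure from `d^{π*}` to `d^π_ν`.
  have hdiff : (1 - γ) * (valueV P r γ πstar d₀ - valueV P r γ π d₀) ≤
      D / (1 - γ) * ∑ s, d s * g s := by
    rw [performance_difference hP r hπ hπstar hd₀ hγ, mul_sum]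
    refine sum_le_sum fun s _ => ?_
    have hν_le : ν s ≤ d s / (1 - γ) := by
      rw [le_div_iff₀ h1γ, mul_comm]
      exact le_visitDist hP hπ hν hγ s
    calc _ ≤ visitDist P γ πstar d₀ s * g s :=
          mul_le_mul_of_nonneg_left (sub_le_sub_right (hmax πstar hπstar s) _)
            (visitDist_nonneg hP hπstar hd₀ hγ s)
      _ ≤ D * (d s / (1 - γ)) * g s :=
          mul_le_mul_of_nonneg_right
            ((hDν s).trans (mul_le_mul_of_nonneg_left hν_le hD0)) (hg0 s)
      _ = D / (1 - γ) * (d s * g s) := by ring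
  -- Compare with the policy of `PiW` that is closest to greedy.
  obtain ⟨π₂, hπ₂, hmin⟩ := exists_mem_eq_inf' hPiWne fun π₂ : S → A → ℝ =>
    ∑ s, d s * ((⨆ a, Q s a) - ∑ a, Q s a * π₂ s a)
  have hE := le_sup' (fun π₁ => PiW.inf' hPiWne fun π₂ => ∑ s, visitDist P γ π₁ ν s *
    ((⨆ a, valueQ P r γ π₁ s a) - ∑ a, valueQ P r γ π₁ s a * π₂ s a)) hπmem
  have hG := le_sup' (fun π₂ : S → A → ℝ =>
    dotSA (gradV P r γ π ν) fun s a => π₂ s a - π s a) hπ₂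
  generalize (PP.sup' hPPne fun π₁ => PiW.inf' hPiWne fun π₂ => ∑ s, visitDist P γ π₁ ν s *
    ((⨆ a, valueQ P r γ π₁ s a) - ∑ a, valueQ P r γ π₁ s a * π₂ s a)) = E at hE ⊢
  generalize (PiW.sup' hPiWne fun π₂ : S → A → ℝ =>
    dotSA (gradV P r γ π ν) fun s a => π₂ s a - π s a) = G at hG ⊢
  have hE' : ∑ s, d s * ((⨆ a, Q s a) - ∑ a, Q s a * π₂ s a) ≤ E := hmin ▸ hE
  have hdot : (1 - γ) * dotSA (gradV P r γ π ν) (fun s a => π₂ s a - π s a) =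
      ∑ s, d s * (∑ a, Q s a * π₂ s a - ∑ a, Q s a * π s a) := by
    rw [dotSA, mul_sum]
    refine sum_congr rfl fun s _ => ?_
    rw [← sum_sub_distrib, mul_sum, mul_sum]
    refine sum_congr rfl fun a _ => ?_
    simp only [gradV, ← hQ, ← hd]
    field_simp
  have hsplit : ∑ s, d s * g s ≤ E + (1 - γ) * G := by
    have : ∑ s, d s * g s = ∑ s, d s * ((⨆ a, Q s a) - ∑ a, Q s a * π₂ s a) +
        ∑ s, d s * (∑ a, Q s a * π₂ s a - ∑ a, Q s a * π s a) := by
      rw [← sum_add_distrib]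
      exact sum_congr rfl fun s _ => by simp only [hg]; ring
    rw [this, ← hdot]
    exact add_le_add hE' (mul_le_mul_of_nonneg_left hG h1γ.le)
  refine le_of_mul_le_mul_left (hdiff.trans ?_) h1γ
  calc D / (1 - γ) * ∑ s, d s * g s ≤ D / (1 - γ) * (E + (1 - γ) * G) :=
        mul_le_mul_of_nonneg_left hsplit (div_nonneg hD0 h1γ.le)
    _ = (1 - γ) * (D / (1 - γ) * (E / (1 - γ) + G)) := by field_simp
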